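/- 𝔏(F₂)^w_{O(n)} is a proper subset of 𝔏(F₂ × F₂)^w_{O(n)}: every language recognized by a weakly linear-time bounded F₂-automaton is recognized by a weakly linear-time bounded (F₂ × F₂)-automaton, and the non-context-free language { aⁿbⁿcⁿ : n ≥ 0 } is recognized in real time by an (F₂ × F₂)-automaton but is not in 𝔏(F₂)^w_{O(n)}. -/

import Mathlib

/-- A `G`-automaton over input alphabet `α`: a nondeterministic finite automaton
equipped with a register holding an element of the group `G`. -/
structure GAutomaton (α : Type*) (G : Type*) [Group G] where
  /-- the (finite) state set -/
  Q : Type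
  finQ : Finite Q
  /-- the initial state -/
  q0 : Q
  /-- the accepting states -/
  acc : Set Q
  /-- the (finite) transition relation; `none` stands for ε -/
  δ : Set (Q × Option α × Q × G)
  finδ : δ.Finite

namespace GAutomaton

variable {α : Type*} {G : Type*} [Group G]

/-- One computation step between configurations `(state, register, remaining input)`. -/
def Step (M : GAutomaton α G) (c c' : M.Q × G × List α) : Prop :=
  ∃ σ m, (c.1, σ, c'.1, m) ∈ M.δ ∧ c'.2.1 = c.2.1 * m ∧
    match σ with
    | none => c'.2.2 = c.2.2
    | some s => c.2.2 = s :: c'.2.2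

/-- `M.StepsIn k c c'` : configuration `c'` is reachable from `c` in exactly `k` steps. -/
def StepsIn (M : GAutomaton α G) : ℕ → (M.Q × G × List α) → (M.Q × G × List α) → Prop
  | 0, c, c' => c = c'
  | n + 1, c, c' => ∃ d, M.Step c d ∧ M.StepsIn n d c'

/-- `M` accepts the word `w` within `t` computation steps. -/
def AcceptsIn (M : GAutomaton α G) (w : List α) (t : ℕ) : Prop :=
  ∃ k ≤ t, ∃ q ∈ M.acc, M.StepsIn k (M.q0, 1, w) (q, 1, [])

/-- The language recognized by `M`. -/
def lang (M : GAutomaton α G) : Language α := {w | ∃ t, M.AcceptsIn w t}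

/-- `M` is real-time if every transition consumes an input symbol. -/
def RealTime (M : GAutomaton α G) : Prop := ∀ tr ∈ M.δ, tr.2.1 ≠ none

end GAutomaton

/-- `L ∈ 𝔏(G)` : the language `L` is recognized by some `G`-automaton. -/
def GRecognizable (G : Type*) [Group G] {α : Type*} (L : Language α) : Prop :=
  ∃ M : GAutomaton α G, M.lang = L

/-- `L ∈ 𝔏(G)ʷ_{t(n)}` : `L` is recognized by a weakly `t(n)` time-bounded `G`-automaton. -/
def GRecognizableInTime (G : Type*) [Group G] {α : Type*} (L : Language α) (t : ℕ → ℕ) : Prop :=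
  ∃ M : GAutomaton α G, M.lang = L ∧ ∀ w ∈ L, M.AcceptsIn w (t w.length)

/-- `L ∈ 𝔏(G)ʷ_{O(n)}` : `L` is recognized by a weakly linear-time bounded `G`-automaton. -/
def GRecognizableLinTime (G : Type*) [Group G] {α : Type*} (L : Language α) : Prop :=
  ∃ C : ℕ, GRecognizableInTime G L (fun n => C * n + C)

/-- The language `{ aⁿbⁿcⁿ : n ≥ 0 }` over the alphabet `{a, b, c}` (as `Fin 3`). -/
def ABC : Language (Fin 3) :=
  {w | ∃ n : ℕ,
    w = List.replicate n 0 ++ List.replicate n 1 ++ List.replicate n 2}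

/-!
A computation over a free group is accepting iff its register updates, written out letter by letter,
reduce to the empty word. Cancelling pairs are nested like brackets, so finitely many context-free
rules describe the words read along the computations with trivial register; hence the languages of
free group automata are context-free.

A long enough word of a context-free language has a factor, bounded in length but longer than the
shortest word derived from the same nonterminal, and this shortest word can replace it. In `aⁿbⁿcⁿ`,
for large `n`, a bounded factor misses the first or the last block, so the replacement shortens the
word but keeps all `n` occurrences of `a` or of `c`. Over a product of two groups with elements of
infinite order, on the other hand, one component can compare `#a` with `#b` and the other `#b` with
`#c`.
-/

section ContextFree

variable {T N : Type*}

/-- The language denoted by a grammar symbol when each nonterminal `A` denotes `P A`. -/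
def symbolLanguage (P : N → Language T) : Symbol T N → Language T
  | .terminal a => {[a]}
  | .nonterminal A => P A

/-- The language denoted by a sentential form when each nonterminal `A` denotes `P A`. -/
def formLanguage (P : N → Language T) (s : List (Symbol T N)) : Language T :=
  (s.map (symbolLanguage P)).prod

/-- The family `P` is a pre-fixed point of the rules of `g`, read as a system of inequalities
between languages. -/
def IsClosedUnderRules (g : ContextFreeGrammar T) (P : g.NT → Language T) : Prop :=
  ∀ r ∈ g.rules, formLanguage P r.output ≤ P r.input

/-- The words that the nonterminal `A` of `g` derives. -/
def generated (g : ContextFreeGrammar T) (A : g.NT) : Language T :=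
  {x | g.Derives [.nonterminal A] (x.map .terminal)}

variable {P P' : N → Language T}

@[simp]
theorem formLanguage_nil : formLanguage P [] = 1 := rfl

@[simp]
theorem formLanguage_cons (σ : Symbol T N) (s : List (Symbol T N)) :
    formLanguage P (σ :: s) = symbolLanguage P σ * formLanguage P s := rfl

theorem formLanguage_append (s t : List (Symbol T N)) :
    formLanguage P (s ++ t) = formLanguage P s * formLanguage P t := by
  simp [formLanguage]

theorem formLanguage_singleton (A : N) : formLanguage P [.nonterminal A] = P A := by
  simp [symbolLanguage]

theorem formLanguage_map_terminal (x : List T) :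
    formLanguage P (x.map .terminal) = {x} := by
  induction x with
  | nil => rfl
  | cons a x ih => rw [List.map_cons, formLanguage_cons, ih]; exact Set.image2_singleton

theorem symbolLanguage_mono (h : P ≤ P') (σ : Symbol T N) :
    symbolLanguage P σ ≤ symbolLanguage P' σ := by
  cases σ with
  | terminal a => exact le_rfl
  | nonterminal A => exact h A

theorem formLanguage_mono (h : P ≤ P') (s : List (Symbol T N)) :
    formLanguage P s ≤ formLanguage P' s :=
  List.prod_le_prod' fun σ _ => symbolLanguage_mono h σ

variable {g : ContextFreeGrammar T}

theorem IsClosedUnderRules.formLanguage_le_of_derives {P : g.NT → Language T}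
    (hP : IsClosedUnderRules g P) {s t : List (Symbol T g.NT)} (h : g.Derives s t) :
    formLanguage P t ≤ formLanguage P s := by
  induction h with
  | refl => exact le_rfl
  | tail _ hstep ih =>
    obtain ⟨r, hr, hrw⟩ := hstep
    obtain ⟨p, q, rfl, rfl⟩ := hrw.exists_parts
    refine le_trans ?_ ih
    simp only [formLanguage_append, formLanguage_singleton]
    gcongr
    exact hP r hr

theorem derives_of_mem_formLanguage_generated {s : List (Symbol T g.NT)} {x : List T}
    (h : x ∈ formLanguage (generated g) s) : g.Derives s (x.map .terminal) := by
  induction s generalizing x with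
  | nil => cases h; exact .refl _
  | cons σ s ih =>
    obtain ⟨y, hy, z, hz, rfl⟩ := h
    have hσ : g.Derives [σ] (y.map .terminal) := by
      cases σ with
      | terminal a => cases hy; exact .refl _
      | nonterminal A => exact hy
    rw [List.map_append]
    exact (hσ.append_right s).trans ((ih hz).append_left _)

theorem isClosedUnderRules_generated : IsClosedUnderRules g (generated g) := by
  intro r hr x hx
  have hstep : g.Produces [.nonterminal r.input] r.output := ⟨r, hr, .input_output⟩
  exact hstep.trans_derives (derives_of_mem_formLanguage_generated hx)

theorem IsClosedUnderRules.generated_le {P : g.NT → Language T} (hP : IsClosedUnderRules g P) :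
    generated g ≤ P := by
  intro A x hx
  have h := hP.formLanguage_le_of_derives hx
  rw [formLanguage_map_terminal, formLanguage_singleton] at h
  exact h rfl

theorem exists_replaceable_symbol (hP : P ≤ P') {s : List (Symbol T N)} {x : List T} {b : ℕ}
    (hx : x ∈ formLanguage P s) (hlong : s.length * b < x.length) :
    ∃ σ, ∃ y ∈ symbolLanguage P σ, ∃ u z, x = u ++ y ++ z ∧ b < y.length ∧
      ∀ y' ∈ symbolLanguage P' σ, u ++ y' ++ z ∈ formLanguage P' s := by
  induction s generalizing x with
  | nil => cases hx; simp at hlong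
  | cons σ s ih =>
    obtain ⟨y, hy, z, hz, rfl⟩ := hx
    simp only [List.length_cons, List.length_append, add_mul, one_mul] at hlong
    by_cases hby : b < y.length
    · exact ⟨σ, y, hy, [], z, rfl, hby, fun y' hy' =>
        Language.append_mem_mul hy' (formLanguage_mono hP s hz)⟩
    · obtain ⟨τ, v, hv, u, w, rfl, hbv, hrepl⟩ := ih hz (by omega)
      refine ⟨τ, v, hv, y ++ u, w, by simp, hbv, fun y' hy' => ?_⟩
      simpa using Language.append_mem_mul (symbolLanguage_mono hP σ hy) (hrepl y' hy')

/-- Some factor of `x` of length in the window `(b, c]` is derived from the left-hand side of a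
rule, and replacing it by any other word so derived leaves a word derived from `A`. -/
def HasReplaceableFactor (g : ContextFreeGrammar T) (b c : ℕ) (A : g.NT) (x : List T) : Prop :=
  ∃ r ∈ g.rules, ∃ y ∈ generated g r.input, ∃ u z, x = u ++ y ++ z ∧ b < y.length ∧
    y.length ≤ c ∧ ∀ y' ∈ generated g r.input, u ++ y' ++ z ∈ generated g A

/-- Descend in a derivation tree to a subtree with a word longer than `b`, for as long as one
exists: the last word reached is the concatenation of at most `d` words of length at most `b`. -/
theorem hasReplaceableFactor_of_mem_generated {b d : ℕ} (hb : 1 ≤ b)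
    (hd : ∀ r ∈ g.rules, r.output.length ≤ d) {A : g.NT} {x : List T} (hx : x ∈ generated g A)
    (hbx : b < x.length) : HasReplaceableFactor g b (d * b) A x := by
  set P : g.NT → Language T := fun A =>
    {x | x ∈ generated g A ∧ (b < x.length → HasReplaceableFactor g b (d * b) A x)}
  have hPle : P ≤ generated g := fun A x hx => hx.1
  suffices hP : IsClosedUnderRules g P from (hP.generated_le A hx).2 hbx
  intro r hr x hx
  have hxr := isClosedUnderRules_generated r hr (formLanguage_mono hPle _ hx)
  refine ⟨hxr, fun hbx => ?_⟩
  by_cases hshort : x.length ≤ d * b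
  · exact ⟨r, hr, x, hxr, [], [], by simp, hbx, hshort, by simp⟩
  have hlong : r.output.length * b < x.length := by
    have := Nat.mul_le_mul_right b (hd r hr)
    omega
  obtain ⟨σ, y, hy, u, z, rfl, hby, hrepl⟩ := exists_replaceable_symbol hPle hx hlong
  cases σ with
  | terminal a =>
    obtain rfl : y = [a] := hy
    exact absurd hby (by rw [List.length_singleton]; omega)
  | nonterminal B =>
    obtain ⟨r', hr', v, hv, u', z', rfl, hbv, hvd, hrepl'⟩ := hy.2 hby
    refine ⟨r', hr', v, hv, u ++ u', z' ++ z, by simp, hbv, hvd, fun y' hy' => ?_⟩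
    have hmem : u ++ (u' ++ y' ++ z') ++ z ∈ generated g r.input :=
      isClosedUnderRules_generated r hr (hrepl _ (hrepl' y' hy'))
    simpa only [List.append_assoc] using hmem

theorem exists_generated_length_le (g : ContextFreeGrammar T) :
    ∃ b, ∀ r ∈ g.rules, ∀ y ∈ generated g r.input,
      ∃ y' ∈ generated g r.input, y'.length ≤ b := by
  have hrule : ∀ A : g.NT, ∃ b, ∀ y ∈ generated g A, ∃ y' ∈ generated g A, y'.length ≤ b := by
    intro A
    by_cases hA : ∃ y, y ∈ generated g A
    · obtain ⟨y, hy⟩ := hA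
      exact ⟨y.length, fun _ _ => ⟨y, hy, le_rfl⟩⟩
    · exact ⟨0, fun y hy => absurd ⟨y, hy⟩ hA⟩
  choose b hb using hrule
  refine ⟨g.rules.sup fun r => b r.input, fun r hr y hy => ?_⟩
  obtain ⟨y', hy', hle⟩ := hb r.input y hy
  exact ⟨y', hy', hle.trans (Finset.le_sup (f := fun r => b r.input) hr)⟩

/-- With `b` bounding the shortest words derived from the left-hand sides of rules, these can
replace a factor longer than `b`. -/
theorem exists_shorter_replacement_of_isContextFree {L : Language T} (hL : L.IsContextFree) :
    ∃ n, ∀ x ∈ L, n < x.length → ∃ u y z y', x = u ++ y ++ z ∧ y.length ≤ n ∧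
      y'.length < y.length ∧ u ++ y' ++ z ∈ L := by
  obtain ⟨g, rfl⟩ := hL
  obtain ⟨b, hb⟩ := exists_generated_length_le g
  set d := g.rules.sup fun r => r.output.length
  have hd : ∀ r ∈ g.rules, r.output.length ≤ d := fun r hr =>
    Finset.le_sup (f := fun r : ContextFreeRule T g.NT => r.output.length) hr
  refine ⟨(d + 1) * (b + 1), fun x hx hlong => ?_⟩
  rw [add_mul, one_mul] at hlong
  obtain ⟨r, hr, y, hy, u, z, hxy, hby, hyd, hrepl⟩ :=
    hasReplaceableFactor_of_mem_generated (b := b + 1) (by omega) hd hx (by omega)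
  obtain ⟨y', hy', hle⟩ := hb r hr y hy
  exact ⟨u, y, z, y', hxy, by rw [add_mul]; omega, by omega, hrepl y' hy'⟩

end ContextFree

theorem not_isContextFree_ABC : ¬ ABC.IsContextFree := by
  intro hABC
  obtain ⟨n, hn⟩ := exists_shorter_replacement_of_isContextFree hABC
  obtain ⟨u, y, z, y', hx, hyn, hlt, m, hm⟩ := hn _ ⟨n + 1, rfl⟩
    (by simp only [List.length_append, List.length_replicate]; omega)
  have hlen := congrArg List.length hx
  have hlen' := congrArg List.length hm
  have hcount₀ := congrArg (List.count 0) hm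
  have hcount₂ := congrArg (List.count 2) hm
  simp only [List.length_append, List.length_replicate] at hlen hlen'
  simp only [Fin.isValue, List.count_append, List.count_replicate_self, List.count_replicate,
    Fin.reduceBEq, Bool.false_eq_true, ↓reduceIte, add_zero, zero_add] at hcount₀ hcount₂
  have hnm : n + 1 ≤ m := by
    rcases (by omega : n + 1 ≤ u.length ∨ n + 1 ≤ z.length) with hu | hz
    · have hpre : List.replicate (n + 1) 0 <+: u := List.prefix_of_prefix_length_le
        (l₃ := u ++ (y ++ z)) ⟨_, by simpa using hx⟩ ⟨_, rfl⟩ (by simpa)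
      have := hpre.sublist.count_le 0
      rw [List.count_replicate_self] at this
      omega
    · have hsuf : List.replicate (n + 1) 2 <:+ z := List.suffix_of_suffix_length_le
        (l₃ := u ++ y ++ z) ⟨_, hx⟩ ⟨_, rfl⟩ (by simpa)
      have := hsuf.sublist.count_le 2
      rw [List.count_replicate_self] at this
      omega
  omega

namespace GAutomaton

theorem StepsIn.trans {α G : Type*} [Group G] {M : GAutomaton α G} {m n : ℕ}
    {c d e : M.Q × G × List α} (h₁ : M.StepsIn m c d) (h₂ : M.StepsIn n d e) :
    M.StepsIn (m + n) c e := by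
  induction m generalizing c with
  | zero => cases h₁; rwa [Nat.zero_add]
  | succ m ih =>
    obtain ⟨c', hc, hd⟩ := h₁
    rw [Nat.succ_add]
    exact ⟨c', hc, ih hd⟩

section FreeGroup

variable {α : Type*} {X : Type}

/-- A node `(q, u)` stands for the state `q` with the word `u` still to be multiplied to the
register, so that letters enter the register one at a time. -/
abbrev Node (M : GAutomaton α (FreeGroup X)) : Type := M.Q × List (X × Bool)

/-- The nonterminals of the grammar of an automaton over a free group: `balanced a b` generates the
words that are read on the way from `a` to `b` with no net change of the register. That `X` lies in
`Type` is due to `ContextFreeGrammar.NT`. -/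
inductive BalancedNT (M : GAutomaton α (FreeGroup X)) : Type
  | start
  | balanced (a b : M.Node)

variable [DecidableEq X]

/-- The nodes that occur in computations: their words are suffixes of register updates. -/
def nodes (M : GAutomaton α (FreeGroup X)) : Set M.Node :=
  {a | a.2 = [] ∨ ∃ t ∈ M.δ, a.2 <:+ t.2.2.2.toWord}

/-- The rules of the grammar of an automaton over a free group. -/
inductive BalancedRule (M : GAutomaton α (FreeGroup X)) : ContextFreeRule α M.BalancedNT → Prop
  | start {q} (hq : q ∈ M.acc) :
      BalancedRule M ⟨.start, [.nonterminal (.balanced (M.q0, []) (q, []))]⟩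
  | refl {a} (ha : a ∈ M.nodes) : BalancedRule M ⟨.balanced a a, []⟩
  | read {p σ q m} (h : (p, σ, q, m) ∈ M.δ) :
      BalancedRule M ⟨.balanced (p, []) (q, m.toWord), σ.toList.map .terminal⟩
  | comp {a b c} (ha : a ∈ M.nodes) (hb : b ∈ M.nodes) (hc : c ∈ M.nodes) :
      BalancedRule M ⟨.balanced a c, [.nonterminal (.balanced a b), .nonterminal (.balanced b c)]⟩
  | cancel {p q l u v} (hp : (p, l :: u) ∈ M.nodes) (hq : (q, (l.1, !l.2) :: v) ∈ M.nodes) :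
      BalancedRule M ⟨.balanced (p, l :: u) (q, v),
        [.nonterminal (.balanced (p, u) (q, (l.1, !l.2) :: v))]⟩

variable {M : GAutomaton α (FreeGroup X)}

theorem nil_mem_nodes (q : M.Q) : (q, []) ∈ M.nodes := .inl rfl

theorem toWord_mem_nodes {p q : M.Q} {σ : Option α} {m : FreeGroup X}
    (h : (p, σ, q, m) ∈ M.δ) : (q, m.toWord) ∈ M.nodes :=
  .inr ⟨_, h, List.suffix_rfl⟩

theorem mem_nodes_of_cons {q : M.Q} {l : X × Bool} {u : List (X × Bool)}
    (h : (q, l :: u) ∈ M.nodes) : (q, u) ∈ M.nodes := by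
  obtain h | ⟨t, ht, hu⟩ := h
  · exact absurd h (List.cons_ne_nil l u)
  · exact .inr ⟨t, ht, (List.suffix_cons l u).trans hu⟩

theorem finite_nodes (M : GAutomaton α (FreeGroup X)) : M.nodes.Finite := by
  have := M.finQ
  have hsuffix : {u : List (X × Bool) | ∃ t ∈ M.δ, u <:+ t.2.2.2.toWord}.Finite := by
    refine (M.finδ.biUnion fun t _ => List.finite_toSet t.2.2.2.toWord.tails).subset ?_
    rintro u ⟨t, ht, hu⟩
    exact Set.mem_biUnion ht ((List.mem_tails _ _).2 hu)
  refine (Set.finite_univ.prod ((Set.finite_singleton []).union hsuffix)).subset ?_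
  exact fun a ha => ⟨trivial, ha⟩

theorem finite_balancedRule (M : GAutomaton α (FreeGroup X)) : {r | M.BalancedRule r}.Finite := by
  have := M.finQ
  have hnodes := M.finite_nodes
  have hstart := (Set.toFinite M.acc).image fun q =>
    (⟨.start, [.nonterminal (.balanced (M.q0, []) (q, []))]⟩ : ContextFreeRule α M.BalancedNT)
  have hrefl := hnodes.image fun a => (⟨.balanced a a, []⟩ : ContextFreeRule α M.BalancedNT)
  have hread := M.finδ.image fun t => (⟨.balanced (t.1, []) (t.2.2.1, t.2.2.2.toWord),
    t.2.1.toList.map .terminal⟩ : ContextFreeRule α M.BalancedNT)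
  have hcomp := (hnodes.prod (hnodes.prod hnodes)).image fun t => (⟨.balanced t.1 t.2.2,
    [.nonterminal (.balanced t.1 t.2.1), .nonterminal (.balanced t.2.1 t.2.2)]⟩ :
      ContextFreeRule α M.BalancedNT)
  have hcancel := ((hnodes.prod hnodes).prod (hnodes.prod hnodes)).image fun t =>
    (⟨.balanced t.1.1 t.1.2, [.nonterminal (.balanced t.2.1 t.2.2)]⟩ :
      ContextFreeRule α M.BalancedNT)
  refine ((((hstart.union hrefl).union hread).union hcomp).union hcancel).subset ?_
  rintro _ (hq | ha | h | ⟨ha, hb, hc⟩ | ⟨hp, hq⟩)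
  · exact .inl (.inl (.inl (.inl ⟨_, hq, rfl⟩)))
  · exact .inl (.inl (.inl (.inr ⟨_, ha, rfl⟩)))
  · exact .inl (.inl (.inr ⟨_, h, rfl⟩))
  · exact .inl (.inr ⟨(_, _, _), ⟨ha, hb, hc⟩, rfl⟩)
  · exact .inr ⟨((_, _), (_, _)),
      ⟨⟨hp, mem_nodes_of_cons hq⟩, ⟨mem_nodes_of_cons hp, hq⟩⟩, rfl⟩

/-- The grammar that generates the language of an automaton over a free group. -/
noncomputable def balancedGrammar (M : GAutomaton α (FreeGroup X)) : ContextFreeGrammar α where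
  NT := M.BalancedNT
  initial := .start
  rules := M.finite_balancedRule.toFinset

/-- The words that `balancedGrammar` generates from a nonterminal. -/
noncomputable def derivedLanguage (M : GAutomaton α (FreeGroup X)) : M.BalancedNT → Language α :=
  generated M.balancedGrammar

/-- The words that `balancedGrammar` generates from `balanced a b`. -/
noncomputable def balanced (M : GAutomaton α (FreeGroup X)) (a b : M.Node) : Language α :=
  M.derivedLanguage (.balanced a b)

theorem BalancedRule.formLanguage_le {r : ContextFreeRule α M.BalancedNT} (hr : M.BalancedRule r) :
    formLanguage M.derivedLanguage r.output ≤ M.derivedLanguage r.input :=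
  isClosedUnderRules_generated (g := M.balancedGrammar) r
    (M.finite_balancedRule.mem_toFinset.2 hr)

theorem derivedLanguage_le {P : M.BalancedNT → Language α}
    (hP : ∀ r, M.BalancedRule r → formLanguage P r.output ≤ P r.input) : M.derivedLanguage ≤ P :=
  IsClosedUnderRules.generated_le fun r hr => hP r (M.finite_balancedRule.mem_toFinset.1 hr)

theorem mem_nodes_of_mem_balanced {a b : M.Node} {x : List α} (hx : x ∈ M.balanced a b) :
    a ∈ M.nodes ∧ b ∈ M.nodes := by
  let P : M.BalancedNT → Language α
    | .start => ⊤
    | .balanced a b => {_x | a ∈ M.nodes ∧ b ∈ M.nodes}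
  refine derivedLanguage_le (P := P) ?_ (.balanced a b) hx
  rintro _ (hq | ha | h | ⟨ha, hb, hc⟩ | ⟨hp, hq⟩) x -
  · trivial
  · exact ⟨ha, ha⟩
  · exact ⟨nil_mem_nodes _, toWord_mem_nodes h⟩
  · exact ⟨ha, hc⟩
  · exact ⟨hp, mem_nodes_of_cons hq⟩

theorem nil_mem_balanced {a : M.Node} (ha : a ∈ M.nodes) : [] ∈ M.balanced a a :=
  (BalancedRule.refl ha).formLanguage_le rfl

theorem toList_mem_balanced {p q : M.Q} {σ : Option α} {m : FreeGroup X}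
    (h : (p, σ, q, m) ∈ M.δ) : σ.toList ∈ M.balanced (p, []) (q, m.toWord) :=
  (BalancedRule.read h).formLanguage_le (by rw [formLanguage_map_terminal]; rfl)

theorem balanced_mul_balanced_le (a b c : M.Node) :
    M.balanced a b * M.balanced b c ≤ M.balanced a c := by
  rintro _ ⟨x, hx, y, hy, rfl⟩
  obtain ⟨ha, hb⟩ := mem_nodes_of_mem_balanced hx
  refine (BalancedRule.comp ha hb (mem_nodes_of_mem_balanced hy).2).formLanguage_le ?_
  rw [formLanguage_cons, formLanguage_singleton]
  exact Language.append_mem_mul hx hy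

theorem balanced_mul_balanced_cancel_le (a : M.Node) (p q : M.Q) (l : X × Bool)
    (u v : List (X × Bool)) :
    M.balanced a (p, l :: u) * M.balanced (p, u) (q, (l.1, !l.2) :: v) ≤ M.balanced a (q, v) := by
  rintro _ ⟨x, hx, y, hy, rfl⟩
  have hy' : y ∈ M.balanced (p, l :: u) (q, v) := by
    refine (BalancedRule.cancel (mem_nodes_of_mem_balanced hx).2
      (mem_nodes_of_mem_balanced hy).2).formLanguage_le ?_
    rw [formLanguage_singleton]
    exact hy
  exact balanced_mul_balanced_le _ _ _ (Language.append_mem_mul hx hy')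

/-- The words read on the way from `a` to `b` by computations that multiply the letters of the given
word to the register, one after the other, with balanced computations in between. -/
noncomputable def factored (M : GAutomaton α (FreeGroup X)) :
    List (X × Bool) → M.Node → M.Node → Language α
  | [], a, b => M.balanced a b
  | l :: ls, a, b => ⨆ s : M.Node, M.balanced a (s.1, l :: s.2) * M.factored ls s b

theorem balanced_mul_factored_le (ls : List (X × Bool)) (a b c : M.Node) :
    M.balanced a b * M.factored ls b c ≤ M.factored ls a c := by
  cases ls with
  | nil => exact balanced_mul_balanced_le a b c
  | cons l ls =>
    simp only [factored, Language.mul_iSup, ← mul_assoc]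
    gcongr
    exact balanced_mul_balanced_le _ _ _

theorem factored_le_of_redStep {ls ls' : List (X × Bool)} (h : FreeGroup.Red.Step ls ls')
    (a b : M.Node) : M.factored ls a b ≤ M.factored ls' a b := by
  obtain @⟨L, L', x, β⟩ := h
  induction L generalizing a with
  | nil =>
    simp only [List.nil_append, factored, Language.mul_iSup, ← mul_assoc]
    refine iSup₂_le fun s t => ?_
    grw [balanced_mul_balanced_cancel_le a s.1 t.1 (x, β) s.2 t.2]
    exact balanced_mul_factored_le L' a t b
  | cons l L ih =>
    simp only [List.cons_append, factored]
    gcongr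
    exact ih _

theorem factored_le_of_red {ls ls' : List (X × Bool)} (h : FreeGroup.Red ls ls') (a b : M.Node) :
    M.factored ls a b ≤ M.factored ls' a b := by
  induction h with
  | refl => exact le_rfl
  | tail _ hstep ih => exact ih.trans (factored_le_of_redStep hstep a b)

theorem factored_le_factored_append {q : M.Q} {u : List (X × Bool)} (hu : (q, u) ∈ M.nodes)
    (ls : List (X × Bool)) (b : M.Node) :
    M.factored ls (q, []) b ≤ M.factored (u ++ ls) (q, u) b := by
  induction u with
  | nil => exact le_rfl
  | cons l u ih =>
    intro x hx
    refine Language.mem_iSup.2 ⟨(q, u), ?_⟩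
    exact Language.append_mem_mul (nil_mem_balanced hu) (ih (mem_nodes_of_cons hu) hx)

theorem StepsIn.exists_mem_factored {k : ℕ} {p q : M.Q} {g g' : FreeGroup X} {w : List α}
    (h : M.StepsIn k (p, g, w) (q, g', [])) :
    ∃ ls, g * FreeGroup.mk ls = g' ∧ w ∈ M.factored ls (p, []) (q, []) := by
  induction k generalizing p g w with
  | zero =>
    cases h
    exact ⟨[], mul_one _, nil_mem_balanced (nil_mem_nodes _)⟩
  | succ k ih =>
    obtain ⟨⟨p', g₁, w'⟩, ⟨σ, m, hδ, hg, hw⟩, hk⟩ := h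
    dsimp only at hδ hg hw
    subst hg
    obtain ⟨ls, hls, hw'⟩ := ih hk
    have hσ : σ.toList ++ w' = w := by cases σ <;> simp_all
    refine ⟨m.toWord ++ ls, ?_, ?_⟩
    · rw [← FreeGroup.mul_mk, FreeGroup.mk_toWord, ← mul_assoc]
      exact hls
    · rw [← hσ]
      exact balanced_mul_factored_le _ _ _ _ (Language.append_mem_mul (toList_mem_balanced hδ)
        (factored_le_factored_append (toWord_mem_nodes hδ) ls _ hw'))

theorem StepsIn.mem_balanced {k : ℕ} {p q : M.Q} {g : FreeGroup X} {w : List α}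
    (h : M.StepsIn k (p, g, w) (q, g, [])) : w ∈ M.balanced (p, []) (q, []) := by
  obtain ⟨ls, hls, hw⟩ := h.exists_mem_factored
  have hred : FreeGroup.Red ls [] := by
    obtain ⟨c, hc, hnil⟩ := FreeGroup.Red.exact.1 (mul_eq_left.1 hls)
    rwa [FreeGroup.Red.nil_iff.1 hnil] at hc
  exact factored_le_of_red hred _ _ hw

/-- The family of languages that the nonterminals of `balancedGrammar` stand for. The quantifiers
over `g` and `w` let balanced computations start with any register and any remaining input. -/
def computedLanguage (M : GAutomaton α (FreeGroup X)) : M.BalancedNT → Language α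
  | .start => M.lang
  | .balanced a b => {x | ∀ (g : FreeGroup X) (w : List α), ∃ k,
      M.StepsIn k (a.1, g * .mk a.2, x ++ w) (b.1, g * .mk b.2, w)}

theorem BalancedRule.formLanguage_computedLanguage_le {r : ContextFreeRule α M.BalancedNT}
    (hr : M.BalancedRule r) :
    formLanguage M.computedLanguage r.output ≤ M.computedLanguage r.input := by
  intro x hx
  obtain @⟨q, hq⟩ | _ | @⟨_, σ, _, m, h⟩ | _ | @⟨_, _, l, _, v⟩ := hr
  · rw [formLanguage_singleton] at hx
    obtain ⟨k, hk⟩ := hx 1 []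
    exact ⟨k, k, le_rfl, q, hq, by simpa [← FreeGroup.one_eq_mk] using hk⟩
  · cases hx
    exact fun g w => ⟨0, rfl⟩
  · rw [formLanguage_map_terminal] at hx
    cases hx
    refine fun g w => ⟨1, _, ⟨σ, m, h, ?_, ?_⟩, rfl⟩
    · simp [FreeGroup.mk_toWord, ← FreeGroup.one_eq_mk]
    · cases σ <;> simp
  · rw [formLanguage_cons, formLanguage_singleton] at hx
    obtain ⟨y, hy, z, hz, rfl⟩ := hx
    intro g w
    obtain ⟨k, hk⟩ := hy g (z ++ w)
    obtain ⟨n, hn⟩ := hz g w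
    exact ⟨k + n, by simpa using hk.trans hn⟩
  · rw [formLanguage_singleton] at hx
    intro g w
    obtain ⟨k, hk⟩ := hx (g * .mk [l]) w
    have hcancel : FreeGroup.mk [l] * .mk ((l.1, !l.2) :: v) = .mk v :=
      Quot.sound (FreeGroup.Red.Step.cons_not (x := l.1) (b := l.2))
    rw [mul_assoc, mul_assoc, hcancel, FreeGroup.mul_mk] at hk
    exact ⟨k, hk⟩

theorem language_balancedGrammar (M : GAutomaton α (FreeGroup X)) :
    M.balancedGrammar.language = M.lang := by
  apply le_antisymm
  · exact derivedLanguage_le (fun _ => BalancedRule.formLanguage_computedLanguage_le) .start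
  · rintro w ⟨-, k, -, q, hq, hk⟩
    refine (BalancedRule.start hq).formLanguage_le ?_
    rw [formLanguage_singleton]
    exact hk.mem_balanced

end FreeGroup

theorem isContextFree_lang {α : Type*} {X : Type} (M : GAutomaton α (FreeGroup X)) :
    M.lang.IsContextFree := by
  classical exact ⟨M.balancedGrammar, M.language_balancedGrammar⟩

section Map

variable {α G H : Type*} [Group G] [Group H]

/-- The automaton that keeps the image of the register of `M` under `f` in its register. -/
def map (f : G →* H) (M : GAutomaton α G) : GAutomaton α H where
  Q := M.Q
  finQ := M.finQ
  q0 := M.q0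
  acc := M.acc
  δ := (fun t => (t.1, t.2.1, t.2.2.1, f t.2.2.2)) '' M.δ
  finδ := M.finδ.image _

variable {f : G →* H} {M : GAutomaton α G}

theorem stepsIn_map_iff (hf : Function.Injective f) {k : ℕ} {p q : M.Q} {g g' : G}
    {w w' : List α} :
    (M.map f).StepsIn k (p, f g, w) (q, f g', w') ↔ M.StepsIn k (p, g, w) (q, g', w') := by
  induction k generalizing p g w with
  | zero =>
    change ((p, f g, w) : M.Q × H × List α) = (q, f g', w') ↔ (p, g, w) = (q, g', w')
    simp only [Prod.mk.injEq, hf.eq_iff]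
  | succ k ih =>
    constructor
    · rintro ⟨⟨p₁, h₁, w₁⟩, ⟨_, _, ⟨⟨_, _, _, m⟩, hδ, ht⟩, hh, hw⟩, hk⟩
      cases ht
      obtain rfl : h₁ = f (g * m) := hh.trans (map_mul f g m).symm
      exact ⟨(p₁, g * m, w₁), ⟨_, m, hδ, rfl, hw⟩, ih.1 hk⟩
    · rintro ⟨⟨p₁, g₁, w₁⟩, ⟨σ, m, hδ, hg, hw⟩, hk⟩
      dsimp only at hg
      exact ⟨(p₁, f g₁, w₁), ⟨σ, f m, ⟨_, hδ, rfl⟩, by rw [← map_mul]; exact congrArg f hg, hw⟩,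
        ih.2 hk⟩

theorem acceptsIn_map_iff (hf : Function.Injective f) {w : List α} {t : ℕ} :
    (M.map f).AcceptsIn w t ↔ M.AcceptsIn w t := by
  unfold AcceptsIn
  rw [← map_one f]
  exact exists_congr fun _ => and_congr_right fun _ => exists_congr fun _ =>
    and_congr_right fun _ => stepsIn_map_iff hf

theorem lang_map (hf : Function.Injective f) : (M.map f).lang = M.lang :=
  Set.ext fun _ => exists_congr fun _ => acceptsIn_map_iff hf

end Map

section Monotone

variable {ι : Type} [Finite ι] [Preorder ι] [OrderBot ι] {G : Type*} [Group G]

/-- The real-time automaton that multiplies the register by `f i` on reading `i`. Its state is the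
last letter read, and a smaller letter can no longer be read. -/
def monotoneReader (f : ι → G) : GAutomaton ι G where
  Q := ι
  finQ := inferInstance
  q0 := ⊥
  acc := Set.univ
  δ := (fun t : ι × ι => (t.1, some t.2, t.2, f t.2)) '' {t | t.1 ≤ t.2}
  finδ := (Set.toFinite _).image _

theorem realTime_monotoneReader (f : ι → G) : (monotoneReader f).RealTime := by
  rintro _ ⟨t, -, rfl⟩
  exact Option.some_ne_none _

variable {f : ι → G}

theorem step_monotoneReader_iff {i j : ι} {g g' : G} {w w' : List ι} :
    (monotoneReader f).Step (i, g, w) (j, g', w') ↔ i ≤ j ∧ g' = g * f j ∧ w = j :: w' := by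
  constructor
  · rintro ⟨σ, m, ⟨⟨a, b⟩, hab, ht⟩, hg, hw⟩
    cases ht
    exact ⟨hab, hg, hw⟩
  · rintro ⟨hij, hg, hw⟩
    exact ⟨some j, f j, ⟨(i, j), hij, rfl⟩, hg, hw⟩

theorem exists_stepsIn_monotoneReader_iff {i : ι} {g : G} {w : List ι} :
    (∃ k q, (monotoneReader f).StepsIn k (i, g, w) (q, 1, [])) ↔
      (i :: w).Pairwise (· ≤ ·) ∧ g * (w.map f).prod = 1 := by
  induction w generalizing i g with
  | nil =>
    rw [List.map_nil, List.prod_nil, mul_one]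
    constructor
    · rintro ⟨_ | k, q, h⟩
      · cases h
        exact ⟨List.pairwise_singleton _ _, rfl⟩
      · obtain ⟨d, hd, -⟩ := h
        exact absurd (step_monotoneReader_iff.1 hd).2.2.symm (List.cons_ne_nil _ _)
    · rintro ⟨-, rfl⟩
      exact ⟨0, i, rfl⟩
  | cons j w ih =>
    have hstep : (∃ k q, (monotoneReader f).StepsIn k (i, g, j :: w) (q, 1, [])) ↔
        i ≤ j ∧ ∃ k q, (monotoneReader f).StepsIn k (j, g * f j, w) (q, 1, []) := by
      constructor
      · rintro ⟨_ | k, q, h⟩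
        · cases h
        · obtain ⟨⟨p, g', w'⟩, hd, hk⟩ := h
          obtain ⟨hij, rfl, hw⟩ := step_monotoneReader_iff.1 hd
          cases hw
          exact ⟨hij, k, q, hk⟩
      · rintro ⟨hij, k, q, hk⟩
        exact ⟨k + 1, q, _, step_monotoneReader_iff.2 ⟨hij, rfl, rfl⟩, hk⟩
    rw [hstep, ih, List.map_cons, List.prod_cons, ← mul_assoc, ← and_assoc]
    simp only [← List.isChain_iff_pairwise, List.isChain_cons_cons]

theorem mem_lang_monotoneReader_iff {w : List ι} :
    w ∈ (monotoneReader f).lang ↔ w.Pairwise (· ≤ ·) ∧ (w.map f).prod = 1 := by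
  have hlang : w ∈ (monotoneReader f).lang ↔
      ∃ k q, (monotoneReader f).StepsIn k ((⊥ : ι), 1, w) (q, 1, []) :=
    ⟨fun ⟨_, k, _, q, _, h⟩ => ⟨k, q, h⟩, fun ⟨k, q, h⟩ => ⟨k, k, le_rfl, q, trivial, h⟩⟩
  rw [hlang, exists_stepsIn_monotoneReader_iff, one_mul, List.pairwise_cons,
    and_iff_right fun _ _ => bot_le]

end Monotone

end GAutomaton

theorem GRecognizableInTime.of_injective {α G H : Type*} [Group G] [Group H] {f : G →* H}
    (hf : Function.Injective f) {L : Language α} {t : ℕ → ℕ} (hL : GRecognizableInTime G L t) :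
    GRecognizableInTime H L t := by
  obtain ⟨M, hM, ht⟩ := hL
  exact ⟨M.map f, (GAutomaton.lang_map hf).trans hM,
    fun w hw => (GAutomaton.acceptsIn_map_iff hf).2 (ht w hw)⟩

section ABC

variable {G H : Type*} [Group G] [Group H]

theorem inv_mul_self_zpow (g : G) (k : ℤ) : g⁻¹ * g ^ k = g ^ (k - 1) := by
  rw [← zpow_neg_one, ← zpow_add, neg_add_eq_sub]

/-- Weights of the letters `a`, `b`, `c` for which a product of weights records the differences
`#a - #b` and `#b - #c` as exponents of `g` and `h`. -/
def abcWeight (g : G) (h : H) : Fin 3 → G × H :=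
  ![(g, 1), (g⁻¹, h), (1, h⁻¹)]

theorem prod_map_abcWeight (g : G) (h : H) (w : List (Fin 3)) :
    (w.map (abcWeight g h)).prod =
      (g ^ ((w.count 0 : ℤ) - w.count 1), h ^ ((w.count 1 : ℤ) - w.count 2)) := by
  induction w with
  | nil => simp [Prod.one_eq_mk]
  | cons i w ih =>
    rw [List.map_cons, List.prod_cons, ih]
    fin_cases i <;>
      simp [abcWeight, mul_self_zpow, inv_mul_self_zpow, sub_add_eq_add_sub, sub_sub]

theorem prod_map_abcWeight_eq_one_iff {g : G} {h : H} (hg : ¬ IsOfFinOrder g)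
    (hh : ¬ IsOfFinOrder h) {w : List (Fin 3)} :
    (w.map (abcWeight g h)).prod = 1 ↔ w.count 0 = w.count 1 ∧ w.count 1 = w.count 2 := by
  rw [← injective_zpow_iff_not_isOfFinOrder] at hg hh
  rw [prod_map_abcWeight, Prod.mk_eq_one, ← zpow_zero g, ← zpow_zero h, hg.eq_iff, hh.eq_iff]
  omega

theorem eq_replicate_of_pairwise_le {w : List (Fin 3)} (h : w.Pairwise (· ≤ ·)) :
    w = List.replicate (w.count 0) 0 ++ List.replicate (w.count 1) 1 ++
      List.replicate (w.count 2) 2 := by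
  refine List.Perm.eq_of_pairwise' h ?_ (List.perm_iff_count.2 fun a => ?_)
  · simp only [List.pairwise_append, List.mem_append, List.mem_replicate]
    grind
  · fin_cases a <;> simp [List.count_replicate]

theorem mem_ABC_iff {w : List (Fin 3)} :
    w ∈ ABC ↔ w.Pairwise (· ≤ ·) ∧ w.count 0 = w.count 1 ∧ w.count 1 = w.count 2 := by
  constructor
  · rintro ⟨n, rfl⟩
    simp [List.pairwise_append, List.pairwise_replicate, List.count_replicate]
  · rintro ⟨hw, h₀₁, h₁₂⟩
    refine ⟨w.count 2, ?_⟩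
    conv_lhs => rw [eq_replicate_of_pairwise_le hw, h₀₁, h₁₂]

theorem lang_monotoneReader_abcWeight {g : G} {h : H} (hg : ¬ IsOfFinOrder g)
    (hh : ¬ IsOfFinOrder h) :
    (GAutomaton.monotoneReader (abcWeight g h)).lang = ABC := by
  ext w
  rw [GAutomaton.mem_lang_monotoneReader_iff, prod_map_abcWeight_eq_one_iff hg hh, mem_ABC_iff]

end ABC

theorem F2_lintime_lt_F2xF2_lintime_general {X : Type} [Nonempty X] {H : Type*} [Group H]
    {h : H} (hh : ¬ IsOfFinOrder h) :
    (∀ (α : Type*) (L : Language α) (t : ℕ → ℕ),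
      GRecognizableInTime (FreeGroup X) L t → GRecognizableInTime (FreeGroup X × H) L t) ∧
    ¬ ABC.IsContextFree ∧
    (∃ M : GAutomaton (Fin 3) (FreeGroup X × H), M.RealTime ∧ M.lang = ABC) ∧
    ¬ GRecognizable (FreeGroup X) ABC := by
  refine ⟨fun _ _ _ => .of_injective (f := .inl _ H) (Prod.mk_left_injective 1),
    not_isContextFree_ABC, ?_, fun ⟨M, hM⟩ => not_isContextFree_ABC (hM ▸ M.isContextFree_lang)⟩
  obtain ⟨x⟩ := ‹Nonempty X›
  have hx : ¬ IsOfFinOrder (FreeGroup.of x) :=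
    not_isOfFinOrder_of_isMulTorsionFree (FreeGroup.of_ne_one x)
  exact ⟨_, GAutomaton.realTime_monotoneReader _, lang_monotoneReader_abcWeight hx hh⟩

/-- `𝔏(F₂)ʷ_{O(n)} ⊊ 𝔏(F₂ × F₂)ʷ_{O(n)}`: every language recognized by
a weakly linear-time bounded `F₂`-automaton is recognized by a weakly linear-time bounded
`(F₂ × F₂)`-automaton, and the non-context-free language `{aⁿbⁿcⁿ}` is recognized in real
time by an `(F₂ × F₂)`-automaton but is not in `𝔏(F₂)ʷ_{O(n)}`. -/
theorem F2_lintime_lt_F2xF2_lintime :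
    (∀ (α : Type) [Fintype α] (L : Language α),
      GRecognizableLinTime (FreeGroup (Fin 2)) L →
        GRecognizableLinTime (FreeGroup (Fin 2) × FreeGroup (Fin 2)) L) ∧
    ¬ ABC.IsContextFree ∧
    (∃ M : GAutomaton (Fin 3) (FreeGroup (Fin 2) × FreeGroup (Fin 2)),
      M.RealTime ∧ M.lang = ABC) ∧
    ¬ GRecognizableLinTime (FreeGroup (Fin 2)) ABC := by
  obtain ⟨hmono, hcf, hrt, hrec⟩ := F2_lintime_lt_F2xF2_lintime_general (X := Fin 2)
    (not_isOfFinOrder_of_isMulTorsionFree (FreeGroup.of_ne_one (0 : Fin 2)))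
  exact ⟨fun α _ L ⟨C, hL⟩ => ⟨C, hmono α L _ hL⟩, hcf, hrt, fun ⟨_, M, hM, _⟩ => hrec ⟨M, hM⟩⟩
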